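/- Let p > 1 and let f : M_sym → [0,∞) be convex with f(0) = 0 and c(|ξ|^p − 1) ≤ f(ξ) ≤ C(|ξ|^p + 1) for all ξ ∈ M_sym, for some constants 0 < c ≤ C. Assume that for every ξ ∈ M_sym the limit f̃(ξ) := lim_{|s|→∞} f(sξ)/|s|^p exists (s ∈ ℝ, both signs). Then: f̃ is convex; f̃ is positively p-homogeneous, i.e. f̃(tξ) = t^p f̃(ξ) for all t ≥ 0 and ξ; f̃(−ξ) = f̃(ξ); c|ξ|^p ≤ f̃(ξ) ≤ C|ξ|^p for all ξ; and the map ξ ↦ f̃(ξ)^{1/p} is a norm on M_sym. -/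

import Mathlib

/-!
Write `f̃` for the limit. Convexity and the two-sided growth bound pass to the limit pointwise, since
`|s| ^ p → ∞` kills the additive constants. Substituting `s ↦ s * t`, which preserves the filter
`|s| → ∞` for either sign of `t`, gives `f̃ (t ξ) = |t| ^ p f̃ ξ` (`ftil_smul`): this contains both
positive `p`-homogeneity and evenness. The lower bound makes `f̃` definite. The triangle
inequality for `f̃ ^ (1 / p)` is the usual gauge argument: with `a = f̃ ξ ^ (1 / p)` and
`b = f̃ ζ ^ (1 / p)` positive, `ξ / a` and `ζ / b` lie in the convex set `{f̃ ≤ 1}`, hence so does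
their convex combination `(ξ + ζ) / (a + b)` with weights `a / (a + b)` and `b / (a + b)`.
-/

open Filter

noncomputable section

/-- The Frobenius norm of an `n × n` array. -/
def frobNorm {n : ℕ} (M : Fin n → Fin n → ℝ) : ℝ := Real.sqrt (∑ i, ∑ j, (M i j) ^ 2)

/-- The set of symmetric `n × n` arrays (`M_sym`). -/
def symSet (n : ℕ) : Set (Fin n → Fin n → ℝ) := {ξ | ∀ k l, ξ k l = ξ l k}

lemma frobNorm_nonneg {n : ℕ} (M : Fin n → Fin n → ℝ) : 0 ≤ frobNorm M := Real.sqrt_nonneg _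

lemma frobNorm_smul {n : ℕ} (s : ℝ) (M : Fin n → Fin n → ℝ) :
    frobNorm (s • M) = |s| * frobNorm M := by
  unfold frobNorm
  rw [← Real.sqrt_sq_eq_abs, ← Real.sqrt_mul (sq_nonneg s)]
  simp [mul_pow, Finset.mul_sum]

lemma eq_zero_of_frobNorm_eq_zero {n : ℕ} {M : Fin n → Fin n → ℝ} (h : frobNorm M = 0) :
    M = 0 := by
  have hnn : ∀ i, 0 ≤ ∑ j, (M i j) ^ 2 := fun i => Finset.sum_nonneg fun j _ => sq_nonneg _
  have h1 : ∑ i, ∑ j, (M i j) ^ 2 = 0 :=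
    (Real.sqrt_eq_zero (Finset.sum_nonneg fun i _ => hnn i)).1 h
  funext i j
  have h2 := (Finset.sum_eq_zero_iff_of_nonneg fun i _ => hnn i).1 h1 i (Finset.mem_univ i)
  have h3 := (Finset.sum_eq_zero_iff_of_nonneg fun j _ => sq_nonneg (M i j)).1 h2 j
    (Finset.mem_univ j)
  simpa using h3

lemma smul_mem_symSet {n : ℕ} {ξ : Fin n → Fin n → ℝ} (h : ξ ∈ symSet n) (t : ℝ) :
    t • ξ ∈ symSet n := fun k l => by simp [h k l]

lemma tendsto_abs_rpow_cobounded {p : ℝ} (hp : 0 < p) :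
    Tendsto (fun s : ℝ => |s| ^ p) (Bornology.cobounded ℝ) atTop :=
  (tendsto_rpow_atTop hp).comp tendsto_norm_cobounded_atTop

/-- Radial limits at infinity are absolutely `p`-homogeneous. -/
lemma ftil_smul {n : ℕ} {p : ℝ} (hp : 0 < p) {f ftil : (Fin n → Fin n → ℝ) → ℝ} (hf0 : f 0 = 0)
    (hlim : ∀ ξ ∈ symSet n,
      Tendsto (fun s : ℝ => f (s • ξ) / |s| ^ p) (Bornology.cobounded ℝ) (nhds (ftil ξ)))
    {ξ : Fin n → Fin n → ℝ} (hξ : ξ ∈ symSet n) (t : ℝ) :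
    ftil (t • ξ) = |t| ^ p * ftil ξ := by
  have h1 := hlim _ (smul_mem_symSet hξ t)
  rcases eq_or_ne t 0 with rfl | ht
  · simp only [zero_smul, smul_zero, hf0, zero_div] at h1 ⊢
    rw [tendsto_nhds_unique h1 tendsto_const_nhds, abs_zero, Real.zero_rpow hp.ne', zero_mul]
  · have h2 : Tendsto (fun s : ℝ => |t| ^ p * (f ((s * t) • ξ) / |s * t| ^ p))
        (Bornology.cobounded ℝ) (nhds (|t| ^ p * ftil ξ)) :=
      ((hlim ξ hξ).comp (tendsto_mul_right_cobounded ht)).const_mul _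
    refine tendsto_nhds_unique h1 (h2.congr fun s => ?_)
    have : |t| ^ p ≠ 0 := (Real.rpow_pos_of_pos (abs_pos.2 ht) p).ne'
    rw [abs_mul, Real.mul_rpow (abs_nonneg _) (abs_nonneg _), smul_smul, mul_comm (|s| ^ p),
      ← div_div, div_eq_mul_inv (f _), ← mul_div_assoc, mul_comm (f _), mul_inv_cancel_left₀ this]

/-- The gauge argument: a definite convex function that is absolutely `p`-homogeneous
has a subadditive `p`-th root. -/
lemma rpow_inv_add_le {n : ℕ} {p : ℝ} (hp : 0 < p) {g : (Fin n → Fin n → ℝ) → ℝ}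
    (hconv : ConvexOn ℝ (symSet n) g)
    (hhom : ∀ ξ ∈ symSet n, ∀ t : ℝ, g (t • ξ) = |t| ^ p * g ξ)
    (hnn : ∀ ξ ∈ symSet n, 0 ≤ g ξ) (hdef : ∀ ξ ∈ symSet n, g ξ = 0 → ξ = 0)
    {ξ ζ : Fin n → Fin n → ℝ} (hξ : ξ ∈ symSet n) (hζ : ζ ∈ symSet n) :
    g (ξ + ζ) ^ (1 / p) ≤ g ξ ^ (1 / p) + g ζ ^ (1 / p) := by
  have hroot : ∀ x : ℝ, 0 ≤ x → (x ^ (1 / p)) ^ p = x := fun x hx => by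
    rw [one_div, Real.rpow_inv_rpow hx hp.ne']
  rcases (hnn ξ hξ).eq_or_lt with h0 | hgξ
  · rw [hdef ξ hξ h0.symm, zero_add]
    exact le_add_of_nonneg_left (Real.rpow_nonneg (hdef ξ hξ h0.symm ▸ hnn ξ hξ) _)
  rcases (hnn ζ hζ).eq_or_lt with h0 | hgζ
  · rw [hdef ζ hζ h0.symm, add_zero]
    exact le_add_of_nonneg_right (Real.rpow_nonneg (hdef ζ hζ h0.symm ▸ hnn ζ hζ) _)
  have ha : 0 < g ξ ^ (1 / p) := Real.rpow_pos_of_pos hgξ _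
  have hb : 0 < g ζ ^ (1 / p) := Real.rpow_pos_of_pos hgζ _
  have hap := hroot _ hgξ.le
  have hbp := hroot _ hgζ.le
  set a := g ξ ^ (1 / p)
  set b := g ζ ^ (1 / p)
  have hab : 0 < a + b := add_pos ha hb
  have hunit : ∀ (η : Fin n → Fin n → ℝ) (r : ℝ), η ∈ symSet n → 0 < r → r ^ p = g η →
      g (r⁻¹ • η) = 1 := fun η r hη hr h => by
    rw [hhom η hη, abs_of_pos (inv_pos.2 hr), Real.inv_rpow hr.le, ← h,
      inv_mul_cancel₀ (Real.rpow_pos_of_pos hr p).ne']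
  have hcomb := hconv.2 (smul_mem_symSet hξ a⁻¹) (smul_mem_symSet hζ b⁻¹)
    (div_pos ha hab).le (div_pos hb hab).le (by rw [← add_div, div_self hab.ne'])
  have hsum : (a / (a + b)) • a⁻¹ • ξ + (b / (a + b)) • b⁻¹ • ζ = (a + b)⁻¹ • (ξ + ζ) := by
    rw [smul_smul, smul_smul, smul_add]
    congr 2 <;> field_simp
  have hmem : ξ + ζ ∈ symSet n := fun k l => by simp [hξ k l, hζ k l]
  rw [hsum, hunit ξ a hξ ha hap, hunit ζ b hζ hb hbp, smul_eq_mul, smul_eq_mul, mul_one, mul_one,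
    ← add_div, div_self hab.ne', hhom _ hmem, abs_of_pos (inv_pos.2 hab),
    Real.inv_rpow hab.le, inv_mul_le_iff₀ (Real.rpow_pos_of_pos hab p), mul_one] at hcomb
  calc g (ξ + ζ) ^ (1 / p) ≤ ((a + b) ^ p) ^ (1 / p) :=
        Real.rpow_le_rpow (hnn _ hmem) hcomb (by positivity)
    _ = a + b := by rw [one_div, Real.rpow_rpow_inv hab.le hp.ne']

/-- if `f : M_sym → [0,∞)` is convex with `f(0) = 0` and `p`-growth
`c(|ξ|^p − 1) ≤ f(ξ) ≤ C(|ξ|^p + 1)`, and `f̃(ξ) = lim_{|s|→∞} f(sξ)/|s|^p` exists for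
every `ξ`, then `f̃` is convex, positively `p`-homogeneous, even, satisfies
`c|ξ|^p ≤ f̃(ξ) ≤ C|ξ|^p`, and `f̃^{1/p}` is a norm on `M_sym`. -/
theorem statement15 (n : ℕ) (hn : 2 ≤ n) (p : ℝ) (hp : 1 < p)
    (c C : ℝ) (hc : 0 < c) (hcC : c ≤ C)
    (f : (Fin n → Fin n → ℝ) → ℝ)
    (hf0 : f 0 = 0) (hfnn : ∀ ξ ∈ symSet n, 0 ≤ f ξ)
    (hconv : ConvexOn ℝ (symSet n) f)
    (hlb : ∀ ξ ∈ symSet n, c * (frobNorm ξ ^ p - 1) ≤ f ξ)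
    (hub : ∀ ξ ∈ symSet n, f ξ ≤ C * (frobNorm ξ ^ p + 1))
    (ftil : (Fin n → Fin n → ℝ) → ℝ)
    (hlim : ∀ ξ ∈ symSet n,
      Tendsto (fun s : ℝ => f (s • ξ) / |s| ^ p) (Bornology.cobounded ℝ)
        (nhds (ftil ξ))) :
    ConvexOn ℝ (symSet n) ftil ∧
    (∀ ξ ∈ symSet n, ∀ t : ℝ, 0 ≤ t → ftil (t • ξ) = t ^ p * ftil ξ) ∧
    (∀ ξ ∈ symSet n, ftil (-ξ) = ftil ξ) ∧
    (∀ ξ ∈ symSet n, c * frobNorm ξ ^ p ≤ ftil ξ ∧ ftil ξ ≤ C * frobNorm ξ ^ p) ∧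
    (∀ ξ ∈ symSet n, ∀ ζ ∈ symSet n,
      ftil (ξ + ζ) ^ (1 / p) ≤ ftil ξ ^ (1 / p) + ftil ζ ^ (1 / p)) ∧
    (∀ ξ ∈ symSet n, ftil ξ = 0 → ξ = 0) ∧
    (∀ ξ ∈ symSet n, ∀ t : ℝ, ftil (t • ξ) ^ (1 / p) = |t| * ftil ξ ^ (1 / p)) := by
  have hp0 : 0 < p := by linarith
  have hhom : ∀ ξ ∈ symSet n, ∀ t : ℝ, ftil (t • ξ) = |t| ^ p * ftil ξ :=
    fun ξ hξ t => ftil_smul hp0 hf0 hlim hξ t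
  have hinv : Tendsto (fun s : ℝ => (|s| ^ p)⁻¹) (Bornology.cobounded ℝ) (nhds 0) :=
    (tendsto_abs_rpow_cobounded hp0).inv_tendsto_atTop
  have hev : ∀ᶠ s : ℝ in Bornology.cobounded ℝ, 0 < |s| ^ p :=
    (tendsto_abs_rpow_cobounded hp0).eventually_gt_atTop 0
  have hC : ConvexOn ℝ (symSet n) ftil := by
    refine ⟨hconv.1, fun ξ hξ ζ hζ a b ha hb hab => ?_⟩
    refine le_of_tendsto_of_tendsto (hlim _ (hconv.1 hξ hζ ha hb hab))
      (((hlim ξ hξ).const_mul a).add ((hlim ζ hζ).const_mul b)) ?_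
    filter_upwards [hev] with s hs
    have h := hconv.2 (smul_mem_symSet hξ s) (smul_mem_symSet hζ s) ha hb hab
    rw [smul_comm a s, smul_comm b s, ← smul_add, smul_eq_mul, smul_eq_mul] at h
    rw [← mul_div_assoc, ← mul_div_assoc, ← add_div]
    exact div_le_div_of_nonneg_right h hs.le
  have hbd : ∀ ξ ∈ symSet n, c * frobNorm ξ ^ p ≤ ftil ξ ∧ ftil ξ ≤ C * frobNorm ξ ^ p := by
    intro ξ hξ
    have hscale : ∀ s : ℝ, frobNorm (s • ξ) ^ p = |s| ^ p * frobNorm ξ ^ p := fun s => by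
      rw [frobNorm_smul, Real.mul_rpow (abs_nonneg _) (frobNorm_nonneg _)]
    constructor
    · have hl : Tendsto (fun s : ℝ => c * (frobNorm ξ ^ p - (|s| ^ p)⁻¹))
          (Bornology.cobounded ℝ) (nhds (c * frobNorm ξ ^ p)) := by
        simpa using (tendsto_const_nhds.sub hinv).const_mul c
      refine le_of_tendsto_of_tendsto hl (hlim ξ hξ) ?_
      filter_upwards [hev] with s hs
      have h := hlb _ (smul_mem_symSet hξ s)
      rw [hscale] at h
      rw [le_div_iff₀ hs]
      refine le_of_eq_of_le ?_ h
      field_simp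
    · have hl : Tendsto (fun s : ℝ => C * (frobNorm ξ ^ p + (|s| ^ p)⁻¹))
          (Bornology.cobounded ℝ) (nhds (C * frobNorm ξ ^ p)) := by
        simpa using (tendsto_const_nhds.add hinv).const_mul C
      refine le_of_tendsto_of_tendsto (hlim ξ hξ) hl ?_
      filter_upwards [hev] with s hs
      have h := hub _ (smul_mem_symSet hξ s)
      rw [hscale] at h
      rw [div_le_iff₀ hs]
      refine h.trans_eq ?_
      field_simp
  have hnn : ∀ ξ ∈ symSet n, 0 ≤ ftil ξ := fun ξ hξ =>
    (mul_nonneg hc.le (Real.rpow_nonneg (frobNorm_nonneg ξ) p)).trans (hbd ξ hξ).1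
  have hdef : ∀ ξ ∈ symSet n, ftil ξ = 0 → ξ = 0 := by
    intro ξ hξ h0
    by_contra hne
    have hpos : 0 < frobNorm ξ :=
      (frobNorm_nonneg ξ).lt_of_ne fun h => hne (eq_zero_of_frobNorm_eq_zero h.symm)
    have h := (hbd ξ hξ).1
    rw [h0] at h
    exact absurd h (not_le.2 (mul_pos hc (Real.rpow_pos_of_pos hpos p)))
  refine ⟨hC, fun ξ hξ t ht => ?_, fun ξ hξ => ?_, hbd,
    fun ξ hξ ζ hζ => rpow_inv_add_le hp0 hC hhom hnn hdef hξ hζ, hdef, fun ξ hξ t => ?_⟩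
  · rw [hhom ξ hξ, abs_of_nonneg ht]
  · have h := hhom ξ hξ (-1)
    rwa [neg_one_smul, abs_neg, abs_one, Real.one_rpow, one_mul] at h
  · rw [hhom ξ hξ, Real.mul_rpow (Real.rpow_nonneg (abs_nonneg _) _) (hnn ξ hξ), one_div,
      Real.rpow_rpow_inv (abs_nonneg _) hp0.ne']
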